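/- If m is an even positive integer that is not a power of 2 (i.e. m = 2^ℓ(2j+1) with ℓ ≥ 1 and j ≥ 1), then U_m = ∅, i.e. no point of K has exactly m distinct codings. -/

import Mathlib

open Filter Topology

/-- `codingApprox f i n = f (i 0) (f (i 1) (⋯ (f (i (n-1)) 0)))`, i.e. the `n`-th
approximation `f_{i_1} ∘ ⋯ ∘ f_{i_n} (0)` of the point coded by `i`. -/
noncomputable def codingApprox (f : Fin 4 → ℝ → ℝ) : (ℕ → Fin 4) → ℕ → ℝ
  | _, 0 => 0
  | i, n + 1 => f (i 0) (codingApprox f (fun k => i (k + 1)) n)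

/-- The set of codings of `x` for the IFS `f`. -/
def codings (f : Fin 4 → ℝ → ℝ) (x : ℝ) : Set (ℕ → Fin 4) :=
  {i | Tendsto (codingApprox f i) atTop (𝓝 x)}

/-!
Write `I = [0, 1]`. The images `f_a(I)` are pairwise disjoint except that `f_2(I)` and `f_3(I)` meet
exactly in `f_2 f_4(I) = f_3 f_1(I)`, and there `f_2 ∘ f_4 = f_3 ∘ f_1`. So a point with a coding
either has a forced first digit, and then it has as many codings as its preimage, or it equals
`f_2 f_4 z = f_3 f_1 z`, and then it has twice as many codings as `z`. Two different codings force
the second alternative after finitely many digits; hence a finite nonzero number of codings is a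
power of two. Digits are indexed from `0` below, so the overlap relation reads
`f 1 (f 3 z) = f 2 (f 0 z)`.
-/

/-- The sequence with first term `a` followed by `s`: the counterpart of `Stream'.cons` for plain
functions on `ℕ`, the type of codings. -/
def consSeq {α : Type*} (a : α) (s : ℕ → α) : ℕ → α
  | 0 => a
  | n + 1 => s n

theorem consSeq_injective {α : Type*} (a : α) : Function.Injective (consSeq a) :=
  fun _ _ h => funext fun n => congrFun h (n + 1)

theorem consSeq_head_tail {α : Type*} (i : ℕ → α) : consSeq (i 0) (fun n => i (n + 1)) = i :=
  funext fun n => by cases n <;> rfl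

section Branching

variable {X α : Type*} {C : X → Set (ℕ → α)}

theorem exists_encard_eq_mul_of_branching {d : ℕ∞}
    (hC : ∀ x, (C x).Nonempty →
      (∃ a y, C x = consSeq a '' C y) ∨ ∃ y, (C x).encard = d * (C y).encard)
    {x : X} {i j : ℕ → α} (hi : i ∈ C x) (hj : j ∈ C x) {n : ℕ} (hn : i n ≠ j n) :
    ∃ y, (C x).encard = d * (C y).encard := by
  induction n generalizing x i j with
  | zero =>
    rcases hC x ⟨i, hi⟩ with ⟨a, y, hxy⟩ | hmul
    · rw [hxy] at hi hj
      obtain ⟨s, -, rfl⟩ := hi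
      obtain ⟨t, -, rfl⟩ := hj
      exact absurd rfl hn
    · exact hmul
  | succ n ih =>
    rcases hC x ⟨i, hi⟩ with ⟨a, y, hxy⟩ | hmul
    · rw [hxy] at hi hj
      obtain ⟨s, hs, rfl⟩ := hi
      obtain ⟨t, ht, rfl⟩ := hj
      rw [hxy, (consSeq_injective a).encard_image]
      exact ih hs ht hn
    · exact hmul

theorem exists_eq_pow_of_branching {d : ℕ} (hd : 1 < d)
    (hC : ∀ x, (C x).Nonempty →
      (∃ a y, C x = consSeq a '' C y) ∨ ∃ y, (C x).encard = d * (C y).encard)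
    {x : X} {m : ℕ} (hm : m ≠ 0) (hx : (C x).encard = m) : ∃ k, m = d ^ k := by
  induction m using Nat.strong_induction_on generalizing x with
  | _ m ih =>
    rcases eq_or_ne m 1 with rfl | hm1
    · exact ⟨0, (pow_zero d).symm⟩
    have hlt : 1 < (C x).encard := by
      rw [hx]
      exact_mod_cast (by lia : 1 < m)
    obtain ⟨i, j, hi, hj, hij⟩ := Set.one_lt_encard_iff.1 hlt
    obtain ⟨n, hn⟩ := Function.ne_iff.1 hij
    obtain ⟨y, hy⟩ := exists_encard_eq_mul_of_branching hC hi hj hn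
    obtain ⟨p, hp⟩ : ∃ p : ℕ, (C y).encard = p := by
      refine ENat.ne_top_iff_exists.1 (fun htop => ?_) |>.imp fun _ => Eq.symm
      rw [hx, htop, ENat.mul_top (by exact_mod_cast (by lia : d ≠ 0))] at hy
      exact ENat.natCast_ne_top m hy
    have hmp : m = d * p := by
      rw [hx, hp] at hy
      exact_mod_cast hy
    have hp0 : p ≠ 0 := right_ne_zero_of_mul (hmp ▸ hm)
    have hpm : p < m := hmp ▸ lt_mul_left (Nat.pos_of_ne_zero hp0) hd
    obtain ⟨k, rfl⟩ := ih p hpm hp0 hp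
    exact ⟨k + 1, hmp.trans (pow_succ' d k).symm⟩

end Branching

section Codings

variable {f : Fin 4 → ℝ → ℝ} {a b : Fin 4} {x y z : ℝ}

theorem codingApprox_mem {J : Set ℝ} (h0 : 0 ∈ J) (hJ : ∀ a, Set.MapsTo (f a) J J)
    (i : ℕ → Fin 4) (n : ℕ) : codingApprox f i n ∈ J := by
  induction n generalizing i with
  | zero => exact h0
  | succ n ih => exact hJ _ (ih _)

theorem mem_image_of_mem_codings {J : Set ℝ} (hJc : IsCompact J) (h0 : 0 ∈ J)
    (hJ : ∀ a, Set.MapsTo (f a) J J) (hf : ∀ a, Continuous (f a)) {i : ℕ → Fin 4}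
    (hi : i ∈ codings f x) : x ∈ f (i 0) '' J :=
  (hJc.image (hf _)).isClosed.mem_of_tendsto ((tendsto_add_atTop_iff_nat 1).2 hi) <|
    .of_forall fun n => Set.mem_image_of_mem _ (codingApprox_mem h0 hJ _ n)

theorem consSeq_mem_codings_iff (hf : IsInducing (f a)) {i : ℕ → Fin 4} :
    consSeq a i ∈ codings f (f a y) ↔ i ∈ codings f y := by
  change Tendsto (codingApprox f (consSeq a i)) atTop _ ↔ Tendsto (codingApprox f i) atTop _
  rw [hf.tendsto_nhds_iff (y := y), ← tendsto_add_atTop_iff_nat 1]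
  rfl

theorem sep_codings_eq_image_consSeq (hf : IsInducing (f a)) (y : ℝ) :
    {i ∈ codings f (f a y) | i 0 = a} = consSeq a '' codings f y := by
  ext i
  constructor
  · rintro ⟨hi, rfl⟩
    rw [← consSeq_head_tail i] at hi
    exact ⟨_, (consSeq_mem_codings_iff hf).1 hi, consSeq_head_tail i⟩
  · rintro ⟨s, hs, rfl⟩
    exact ⟨(consSeq_mem_codings_iff hf).2 hs, rfl⟩

theorem codings_eq_image_consSeq (hf : IsInducing (f a)) (ha : ∀ i ∈ codings f (f a y), i 0 = a) :
    codings f (f a y) = consSeq a '' codings f y := by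
  rw [← sep_codings_eq_image_consSeq hf, Set.sep_eq_self_iff_mem_true.2 ha]

theorem encard_sep_codings (hf : IsInducing (f a)) (y : ℝ) :
    {i ∈ codings f (f a y) | i 0 = a}.encard = (codings f y).encard := by
  rw [sep_codings_eq_image_consSeq hf, (consSeq_injective a).encard_image]

theorem encard_codings_eq_add (hab : a ≠ b) (hfa : IsInducing (f a)) (hfb : IsInducing (f b))
    (hyz : f a y = f b z) (hdigit : ∀ i ∈ codings f (f a y), i 0 = a ∨ i 0 = b) :
    (codings f (f a y)).encard = (codings f y).encard + (codings f z).encard := by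
  have hunion : codings f (f a y) =
      {i ∈ codings f (f a y) | i 0 = a} ∪ {i ∈ codings f (f a y) | i 0 = b} := by
    rw [← Set.sep_or, Set.sep_eq_self_iff_mem_true.2 hdigit]
  have hdisj : Disjoint {i ∈ codings f (f a y) | i 0 = a} {i ∈ codings f (f a y) | i 0 = b} :=
    Set.disjoint_left.2 fun i hia hib => hab (hia.2.symm.trans hib.2)
  rw [hunion, Set.encard_union_eq hdisj, encard_sep_codings hfa, hyz, encard_sep_codings hfb]

end Codings

/-- The translation parts of the four maps, indexed from `0`. -/
noncomputable def overlapShift (lam : ℝ) : Fin 4 → ℝ :=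
  ![0, 2 * lam, 3 * lam - lam ^ 2, 1 - lam]

/-- The iterated function system `x ↦ lam * x + overlapShift lam a`, in which `f 1` and `f 2`
overlap exactly. -/
noncomputable def overlapIFS (lam : ℝ) (a : Fin 4) (x : ℝ) : ℝ :=
  lam * x + overlapShift lam a

theorem overlapIFS_eq_vec (lam : ℝ) :
    overlapIFS lam = ![fun x => lam * x, fun x => lam * x + 2 * lam,
      fun x => lam * x + 3 * lam - lam ^ 2, fun x => lam * x + 1 - lam] := by
  funext a x
  fin_cases a <;> simp [overlapIFS, overlapShift] <;> ring

theorem overlapIFS_one_three (lam z : ℝ) :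
    overlapIFS lam 1 (overlapIFS lam 3 z) = overlapIFS lam 2 (overlapIFS lam 0 z) := by
  change lam * (lam * z + (1 - lam)) + 2 * lam = lam * (lam * z + 0) + (3 * lam - lam ^ 2)
  ring

section Overlap

variable {lam x : ℝ} {a b : Fin 4}

theorem isInducing_overlapIFS (h0 : lam ≠ 0) (a : Fin 4) : IsInducing (overlapIFS lam a) :=
  ((Homeomorph.mulLeft₀ lam h0).trans (Homeomorph.addRight (overlapShift lam a))).isInducing

theorem overlapIFS_image_Icc (h0 : 0 < lam) (a : Fin 4) :
    overlapIFS lam a '' Set.Icc 0 1 = Set.Icc (overlapShift lam a) (lam + overlapShift lam a) := by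
  have himage : overlapIFS lam a '' Set.Icc 0 1 =
      Set.Icc (lam * 0 + overlapShift lam a) (lam * 1 + overlapShift lam a) :=
    Set.image_affine_Icc' h0 _ 0 1
  rwa [mul_zero, zero_add, mul_one] at himage

theorem exists_overlapIFS_one_three_eq (h0 : 0 < lam)
    (hx1 : x ∈ overlapIFS lam 1 '' Set.Icc 0 1) (hx2 : x ∈ overlapIFS lam 2 '' Set.Icc 0 1) :
    ∃ z ∈ Set.Icc (0 : ℝ) 1, overlapIFS lam 1 (overlapIFS lam 3 z) = x := by
  rw [overlapIFS_image_Icc h0] at hx1 hx2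
  have hlow : 3 * lam - lam ^ 2 ≤ x := hx2.1
  have hupp : x ≤ lam + 2 * lam := hx1.2
  refine ⟨(x - (3 * lam - lam ^ 2)) / lam ^ 2, ⟨?_, ?_⟩, ?_⟩
  · exact div_nonneg (sub_nonneg.2 hlow) (sq_nonneg lam)
  · rw [div_le_one (by positivity)]
    linarith
  · change lam * (lam * ((x - (3 * lam - lam ^ 2)) / lam ^ 2) + (1 - lam)) + 2 * lam = x
    field_simp
    ring

/-- The contraction ratios for which `overlapIFS` maps `[0, 1]` into itself and the last image
lies to the right of the overlapping ones. -/
structure IsOverlapRatio (lam : ℝ) : Prop where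
  pos : 0 < lam
  lt_one : lam < 1
  gap : 4 * lam - lam ^ 2 < 1 - lam

theorem IsOverlapRatio.sq_lt_self (h : IsOverlapRatio lam) : lam ^ 2 < lam :=
  pow_lt_self_of_lt_one₀ h.pos h.lt_one one_lt_two

theorem mapsTo_overlapIFS (h : IsOverlapRatio lam) (a : Fin 4) :
    Set.MapsTo (overlapIFS lam a) (Set.Icc 0 1) (Set.Icc 0 1) := by
  rw [Set.mapsTo_iff_image_subset, overlapIFS_image_Icc h.pos]
  have hsq := h.sq_lt_self
  have hgap := h.gap
  have hpos := h.pos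
  refine Set.Icc_subset_Icc ?_ ?_ <;> fin_cases a <;> simp [overlapShift] <;> linarith

theorem mem_overlapIFS_image (h : IsOverlapRatio lam) {i : ℕ → Fin 4}
    (hi : i ∈ codings (overlapIFS lam) x) : x ∈ overlapIFS lam (i 0) '' Set.Icc 0 1 :=
  mem_image_of_mem_codings isCompact_Icc (Set.left_mem_Icc.2 zero_le_one)
    (mapsTo_overlapIFS h) (fun a => (isInducing_overlapIFS h.pos.ne' a).continuous) hi

theorem eq_one_and_eq_two_of_mem_images (h : IsOverlapRatio lam) (hab : a < b)
    (ha : x ∈ overlapIFS lam a '' Set.Icc 0 1) (hb : x ∈ overlapIFS lam b '' Set.Icc 0 1) :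
    a = 1 ∧ b = 2 := by
  rw [overlapIFS_image_Icc h.pos] at ha hb
  have hle : overlapShift lam b ≤ lam + overlapShift lam a := hb.1.trans ha.2
  have hsq := h.sq_lt_self
  have hgap := h.gap
  have hpos := h.pos
  fin_cases a <;> fin_cases b <;> simp [overlapShift] at hab hle ⊢ <;> linarith

theorem first_digit_eq_one_or_two (h : IsOverlapRatio lam)
    (hx1 : x ∈ overlapIFS lam 1 '' Set.Icc 0 1) {i : ℕ → Fin 4}
    (hi : i ∈ codings (overlapIFS lam) x) : i 0 = 1 ∨ i 0 = 2 := by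
  have hx := mem_overlapIFS_image h hi
  rcases lt_trichotomy (i 0) 1 with hlt | heq | hgt
  · exact absurd (eq_one_and_eq_two_of_mem_images h hlt hx hx1).2 (by decide)
  · exact .inl heq
  · exact .inr (eq_one_and_eq_two_of_mem_images h hgt hx1 hx).2

theorem first_digit_eq_of_mem_image (h : IsOverlapRatio lam) (ha1 : a ≠ 1) (ha2 : a ≠ 2)
    (hxa : x ∈ overlapIFS lam a '' Set.Icc 0 1) {i : ℕ → Fin 4}
    (hi : i ∈ codings (overlapIFS lam) x) : i 0 = a := by
  have hx := mem_overlapIFS_image h hi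
  rcases lt_trichotomy (i 0) a with hlt | heq | hgt
  · exact absurd (eq_one_and_eq_two_of_mem_images h hlt hx hxa).2 ha2
  · exact heq
  · exact absurd (eq_one_and_eq_two_of_mem_images h hgt hxa hx).1 ha1

theorem encard_codings_overlapIFS_of_ne (h : IsOverlapRatio lam) {z : ℝ}
    (hz : z ∈ Set.Icc (0 : ℝ) 1) (ha1 : a ≠ 1) (ha2 : a ≠ 2) :
    (codings (overlapIFS lam) (overlapIFS lam a z)).encard =
      (codings (overlapIFS lam) z).encard := by
  have hdigit : ∀ i ∈ codings (overlapIFS lam) (overlapIFS lam a z), i 0 = a := fun _ =>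
    first_digit_eq_of_mem_image h ha1 ha2 (Set.mem_image_of_mem _ hz)
  rw [codings_eq_image_consSeq (isInducing_overlapIFS h.pos.ne' a) hdigit,
    (consSeq_injective a).encard_image]

theorem encard_codings_overlapIFS_one_three (h : IsOverlapRatio lam) {z : ℝ}
    (hz : z ∈ Set.Icc (0 : ℝ) 1) :
    (codings (overlapIFS lam) (overlapIFS lam 1 (overlapIFS lam 3 z))).encard =
      2 * (codings (overlapIFS lam) z).encard := by
  have hmem := Set.mem_image_of_mem (overlapIFS lam 1) (mapsTo_overlapIFS h 3 hz)
  rw [encard_codings_eq_add (by decide) (isInducing_overlapIFS h.pos.ne' 1)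
      (isInducing_overlapIFS h.pos.ne' 2) (overlapIFS_one_three lam z)
      fun _ => first_digit_eq_one_or_two h hmem,
    encard_codings_overlapIFS_of_ne h hz (by decide) (by decide),
    encard_codings_overlapIFS_of_ne h hz (by decide) (by decide), two_mul]

theorem codings_overlapIFS_branching (h : IsOverlapRatio lam)
    (hx : (codings (overlapIFS lam) x).Nonempty) :
    (∃ a y, codings (overlapIFS lam) x = consSeq a '' codings (overlapIFS lam) y) ∨
      ∃ y, (codings (overlapIFS lam) x).encard = 2 * (codings (overlapIFS lam) y).encard := by
  obtain ⟨i, hi⟩ := hx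
  have hxi := mem_overlapIFS_image h hi
  by_cases hforced : ∀ j ∈ codings (overlapIFS lam) x, j 0 = i 0
  · left
    obtain ⟨y, -, hy⟩ := hxi
    rw [← hy] at hforced ⊢
    exact ⟨i 0, y, codings_eq_image_consSeq (isInducing_overlapIFS h.pos.ne' _) hforced⟩
  · right
    push Not at hforced
    obtain ⟨j, hj, hji⟩ := hforced
    have hxj := mem_overlapIFS_image h hj
    obtain ⟨hx1, hx2⟩ : x ∈ overlapIFS lam 1 '' Set.Icc 0 1 ∧
        x ∈ overlapIFS lam 2 '' Set.Icc 0 1 := by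
      rcases hji.lt_or_gt with hlt | hgt
      · obtain ⟨hj1, hi2⟩ := eq_one_and_eq_two_of_mem_images h hlt hxj hxi
        exact ⟨hj1 ▸ hxj, hi2 ▸ hxi⟩
      · obtain ⟨hi1, hj2⟩ := eq_one_and_eq_two_of_mem_images h hgt hxi hxj
        exact ⟨hi1 ▸ hxi, hj2 ▸ hxj⟩
    obtain ⟨z, hz, rfl⟩ := exists_overlapIFS_one_three_eq h.pos hx1 hx2
    exact ⟨z, encard_codings_overlapIFS_one_three h hz⟩

end Overlap

theorem isOverlapRatio_of_lt {lam : ℝ} (h0 : 0 < lam) (h : lam < (5 - Real.sqrt 21) / 2) :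
    IsOverlapRatio lam := by
  have hsq : Real.sqrt 21 ^ 2 = 21 := Real.sq_sqrt (by norm_num)
  have hsqrt : 3 < Real.sqrt 21 := Real.lt_sqrt_of_sq_lt (by norm_num)
  exact ⟨h0, by linarith, by nlinarith⟩

theorem two_pow_mul_odd_ne_two_pow {j : ℕ} (hj : j ≠ 0) (l k : ℕ) :
    2 ^ l * (2 * j + 1) ≠ 2 ^ k := by
  intro h
  have hcop : (2 * j + 1).Coprime (2 ^ k) :=
    (Nat.coprime_two_right.2 (odd_two_mul_add_one j)).pow_right k
  have hone : 2 * j + 1 = 1 := hcop.eq_one_of_dvd (Dvd.intro_left _ h)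
  lia

theorem statement13_general
    (lam : ℝ) (hlam : 0 < lam ∧ lam < (5 - Real.sqrt 21) / 2)
    (f : Fin 4 → ℝ → ℝ)
    (hf : f = ![fun x => lam * x, fun x => lam * x + 2 * lam,
      fun x => lam * x + 3 * lam - lam ^ 2, fun x => lam * x + 1 - lam])
    (x : ℝ) (m : ℕ) (hm : m ≠ 0) (hx : (codings f x).encard = (m : ℕ∞)) :
    ∃ k, m = 2 ^ k := by
  rw [← overlapIFS_eq_vec] at hf
  subst hf
  exact exists_eq_pow_of_branching one_lt_two
    (fun _ => codings_overlapIFS_branching (isOverlapRatio_of_lt hlam.1 hlam.2)) hm hx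

/-- if `m = 2^l * (2j + 1)` with `l ≥ 1`, `j ≥ 1` (an even number that is
not a power of two), then `U_m = ∅`. -/
theorem statement13
    (lam : ℝ) (hlam : 0 < lam ∧ lam < (5 - Real.sqrt 21) / 2)
    (f : Fin 4 → ℝ → ℝ)
    (hf : f = ![fun x => lam * x, fun x => lam * x + 2 * lam,
      fun x => lam * x + 3 * lam - lam ^ 2, fun x => lam * x + 1 - lam])
    (K : Set ℝ) (hKne : K.Nonempty) (hKcpt : IsCompact K)
    (hK : K = f 0 '' K ∪ f 1 '' K ∪ f 2 '' K ∪ f 3 '' K)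
    (U : ℕ → Set ℝ)
    (hU : ∀ k : ℕ, U k = {x ∈ K | (codings f x).encard = (k : ℕ∞)})
    (m l j : ℕ) (hl : 1 ≤ l) (hj : 1 ≤ j) (hm : m = 2 ^ l * (2 * j + 1)) :
    U m = ∅ := by
  subst hm
  refine hU _ ▸ Set.eq_empty_of_forall_notMem fun x ⟨_, hx⟩ => ?_
  obtain ⟨k, hk⟩ := statement13_general lam hlam f hf x _ (by positivity) hx
  exact two_pow_mul_odd_ne_two_pow (Nat.one_le_iff_ne_zero.1 hj) l k hk
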